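/- For every positive integer n, the number of (x,y) ∈ ℤ² with x² + xy + 52y² = n plus twice the number of (x,y) ∈ ℤ² with 4x² + xy + 13y² = n equals A(n) − 2A(n/3) + 3A(n/9) + B(n), where A(m) = ∑_{d|m}(−23/d), B(m) = ∑_{d|m}(69/d)((m/d)/3), and A(m/k), B(m/k) are interpreted as 0 when k ∤ m. -/

import Mathlib

/-- The Kronecker symbol `(a/n)` for `n : ℕ`, built from the Jacobi symbol and
the standard value at `2` (`0` if `a` even, `1` if `a ≡ ±1 (mod 8)`, `-1` otherwise). -/
def kron (a : ℤ) (n : ℕ) : ℤ :=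
  (if a % 2 = 0 then 0 else if a % 8 = 1 ∨ a % 8 = 7 then 1 else -1) ^ (n.factorization 2) *
    jacobiSym a (n / 2 ^ (n.factorization 2))

instance : Fact (Nat.Prime 3) := ⟨by norm_num⟩

/-- `A n = ∑_{d ∣ n} (-23/d)`. -/
def A (n : ℕ) : ℤ := ∑ d ∈ n.divisors, kron (-23) d

/-- `B n = ∑_{d ∣ n} (69/d) · ((n/d)/3)`, with `(·/3)` the Legendre symbol mod 3. -/
def B (n : ℕ) : ℤ := ∑ d ∈ n.divisors, kron 69 d * legendreSym 3 ((n / d : ℕ) : ℤ)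


/-- coefficients of the three reduced forms of discriminant -23: `a x² + (2h+1) x y + c y²` -/
def ca : Fin 3 → ℤ := ![1, 2, 2]
def ch : Fin 3 → ℤ := ![0, 0, -1]
def cc : Fin 3 → ℤ := ![6, 3, 3]

/-- value of the form -/
def fv (e : Fin 3) (x y : ℤ) : ℤ := ca e * x ^ 2 + (2 * ch e + 1) * (x * y) + cc e * y ^ 2

/-- half of (middle coefficient minus one) after substitution -/
def tv (e : Fin 3) (x y z w : ℤ) : ℤ :=
  ca e * (x * z) + ch e * (x * w + y * z) + y * z + cc e * (y * w)

/-- pairs (form, matrix) carrying the form to `(a, 2t+1, c)` -/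
def HS (a t c : ℤ) : Set (Fin 3 × ℤ × ℤ × ℤ × ℤ) :=
  {p | p.2.1 * p.2.2.2.2 - p.2.2.1 * p.2.2.2.1 = 1 ∧ fv p.1 p.2.1 p.2.2.1 = a ∧
    tv p.1 p.2.1 p.2.2.1 p.2.2.2.1 p.2.2.2.2 = t ∧ fv p.1 p.2.2.2.1 p.2.2.2.2 = c}

theorem disc_e (e : Fin 3) : ca e * cc e = ch e ^ 2 + ch e + 6 := by
  fin_cases e <;> simp [ca, ch, cc]

theorem mem_HS (a t c : ℤ) (e : Fin 3) (x y z w : ℤ) : (e, x, y, z, w) ∈ HS a t c ↔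
    x * w - y * z = 1 ∧ fv e x y = a ∧ tv e x y z w = t ∧ fv e z w = c := Iff.rfl

theorem key_disc (e : Fin 3) (x y z w : ℤ) (h : x * w - y * z = 1) :
    fv e x y * fv e z w = tv e x y z w ^ 2 + tv e x y z w + 6 := by
  have hd := disc_e e
  have hg : fv e x y * fv e z w = tv e x y z w ^ 2 + tv e x y z w * (x * w - y * z)
      + 6 * (x * w - y * z) ^ 2 := by
    simp only [fv, tv]
    linear_combination (x * w - y * z) ^ 2 * hd
  rw [h] at hg
  linarith

theorem HS_shift_mem (a t c k : ℤ) (e : Fin 3) (x y z w : ℤ) (h : (e, x, y, z, w) ∈ HS a t c) :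
    (e, x, y, z + k * x, w + k * y) ∈ HS a (t + k * a) (c + k * (2 * t + 1) + k ^ 2 * a) := by
  rw [mem_HS] at h ⊢
  obtain ⟨h1, h2, h3, h4⟩ := h
  refine ⟨by linear_combination h1, h2, ?_, ?_⟩
  · rw [← h2, ← h3]; simp only [fv, tv]; ring
  · rw [← h2, ← h3, ← h4]; simp only [fv, tv]; linear_combination k * h1

theorem HS_shift (a t c k : ℤ) :
    Nat.card (HS a t c) = Nat.card (HS a (t + k * a) (c + k * (2 * t + 1) + k ^ 2 * a)) := by
  refine Nat.card_congr ?_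
  refine ⟨fun p => ⟨(p.1.1, p.1.2.1, p.1.2.2.1, p.1.2.2.2.1 + k * p.1.2.1,
      p.1.2.2.2.2 + k * p.1.2.2.1), HS_shift_mem a t c k _ _ _ _ _ p.2⟩,
      fun p => ⟨(p.1.1, p.1.2.1, p.1.2.2.1,
      p.1.2.2.2.1 + (-k) * p.1.2.1, p.1.2.2.2.2 + (-k) * p.1.2.2.1), ?_⟩, ?_, ?_⟩
  · have := HS_shift_mem a _ _ (-k) _ _ _ _ _ p.2
    convert this using 2 <;> ring
  · rintro ⟨⟨e, x, y, z, w⟩, h⟩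
    simp
  · rintro ⟨⟨e, x, y, z, w⟩, h⟩
    simp

theorem HS_swap_mem (a t c : ℤ) (e : Fin 3) (x y z w : ℤ) (h : (e, x, y, z, w) ∈ HS a t c) :
    (e, z, w, -x, -y) ∈ HS c (-t - 1) a := by
  rw [mem_HS] at h ⊢
  obtain ⟨h1, h2, h3, h4⟩ := h
  refine ⟨by linear_combination h1, h4, ?_, ?_⟩
  · rw [← h3]; simp only [tv]; linear_combination -h1
  · rw [← h2]; simp only [fv]; ring

theorem HS_neg_mem (a t c : ℤ) (e : Fin 3) (x y z w : ℤ) (h : (e, x, y, z, w) ∈ HS a t c) :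
    (e, -x, -y, -z, -w) ∈ HS a t c := by
  rw [mem_HS] at h ⊢
  obtain ⟨h1, h2, h3, h4⟩ := h
  refine ⟨by linear_combination h1, ?_, ?_, ?_⟩
  · rw [← h2]; simp only [fv]; ring
  · rw [← h3]; simp only [tv]; ring
  · rw [← h4]; simp only [fv]; ring

theorem HS_swap (a t c : ℤ) : Nat.card (HS a t c) = Nat.card (HS c (-t - 1) a) := by
  refine Nat.card_congr ?_
  refine ⟨fun p => ⟨(p.1.1, p.1.2.2.2.1, p.1.2.2.2.2, -p.1.2.1, -p.1.2.2.1),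
      HS_swap_mem _ _ _ _ _ _ _ _ p.2⟩,
    fun p => ⟨(p.1.1, -p.1.2.2.2.1, -p.1.2.2.2.2, p.1.2.1, p.1.2.2.1), ?_⟩, ?_, ?_⟩
  · have := HS_neg_mem _ _ _ _ _ _ _ _ (HS_swap_mem _ _ _ _ _ _ _ _ p.2)
    simp only [neg_neg] at this
    convert this using 2
    ring
  · rintro ⟨⟨e, x, y, z, w⟩, h⟩
    simp
  · rintro ⟨⟨e, x, y, z, w⟩, h⟩
    simp

theorem fv_bound (e : Fin 3) (x y : ℤ) (h : fv e x y ≤ 6) : 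
    -2 ≤ x ∧ x ≤ 2 ∧ -1 ≤ y ∧ y ≤ 1 := by
  have h1 : 23 * y ^ 2 ≤ 48 := by
    fin_cases e <;> simp [fv, ca, ch, cc] at h
    · nlinarith [sq_nonneg (2 * x + y), sq_nonneg y]
    · nlinarith [sq_nonneg (4 * x + y), sq_nonneg y]
    · nlinarith [sq_nonneg (4 * x - y), sq_nonneg y]
  have h2 : 23 * x ^ 2 ≤ 144 := by
    fin_cases e <;> simp [fv, ca, ch, cc] at h
    · nlinarith [sq_nonneg (12 * y + x), sq_nonneg x]
    · nlinarith [sq_nonneg (6 * y + x), sq_nonneg x]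
    · nlinarith [sq_nonneg (6 * y - x), sq_nonneg x]
  refine ⟨?_, ?_, ?_, ?_⟩ <;> nlinarith

set_option synthInstance.maxSize 2000 in
set_option synthInstance.maxHeartbeats 400000 in
theorem HS_base (e0 : Fin 3) :
    HS (ca e0) (ch e0) (cc e0) = {(e0, 1, 0, 0, 1), (e0, -1, 0, 0, -1)} := by
  ext ⟨e, x, y, z, w⟩
  rw [mem_HS]
  constructor
  · rintro ⟨h1, h2, h3, h4⟩
    have b1 : ca e0 ≤ 6 := by fin_cases e0 <;> simp [ca]
    have b2 : cc e0 ≤ 6 := by fin_cases e0 <;> simp [cc]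
    obtain ⟨x1, x2, y1, y2⟩ := fv_bound e x y (by omega)
    obtain ⟨z1, z2, w1, w2⟩ := fv_bound e z w (by omega)
    have key : ∀ e0 e : Fin 3, ∀ x ∈ Finset.Icc (-2 : ℤ) 2, ∀ y ∈ Finset.Icc (-1 : ℤ) 1,
      fv e x y = ca e0 → ∀ z ∈ Finset.Icc (-2 : ℤ) 2, ∀ w ∈ Finset.Icc (-1 : ℤ) 1,
      x * w - y * z = 1 → fv e z w = cc e0 → tv e x y z w = ch e0 → 
      (e, x, y, z, w) = (e0, (1 : ℤ), (0 : ℤ), (0 : ℤ), (1 : ℤ)) ∨ 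
      (e, x, y, z, w) = (e0, (-1 : ℤ), (0 : ℤ), (0 : ℤ), (-1 : ℤ)) := by decide +kernel
    exact key e0 e x (by simp; omega) y (by simp; omega) h2 z (by simp; omega) w
      (by simp; omega) h1 h4 h3
  · rintro (h | h) <;> (simp only [Prod.mk.injEq, Set.mem_singleton_iff] at h; obtain ⟨rfl, rfl, rfl, rfl, rfl⟩ := h)
      <;> simp [fv, tv]

theorem HS_base_card (e0 : Fin 3) : Nat.card (HS (ca e0) (ch e0) (cc e0)) = 2 := by
  rw [HS_base, Nat.card_coe_set_eq, Set.ncard_pair]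
  simp

theorem HS_card (m : ℕ) : ∀ a t c : ℤ, a = m → 0 < a → a * c = t ^ 2 + t + 6 →
    Nat.card (HS a t c) = 2 := by
  induction m using Nat.strong_induction_on with
  | _ m ih =>
    -- first the case `-a < 2t+1 ≤ a`
    have main : ∀ a t c : ℤ, a = m → 0 < a → a * c = t ^ 2 + t + 6 → -a < 2 * t + 1 →
        2 * t + 1 ≤ a → Nat.card (HS a t c) = 2 := by
      intro a t c ham ha hd h1 h2
      have hc : 0 < c := by
        have : 0 < a * c := by rw [hd]; nlinarith [sq_nonneg (2 * t + 1)]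
        exact pos_of_mul_pos_right this ha.le
      by_cases hca : c < a
      · rw [HS_swap]
        exact ih c.toNat (by omega) c _ a (by omega) hc (by linarith [mul_comm a c, show (-t-1)^2+(-t-1)+6 = t^2+t+6 by ring])
      · have h3 : a ≤ 2 := by
          by_contra hcon
          have : (2 * t + 1) ^ 2 ≤ a ^ 2 := by nlinarith
          nlinarith
        have h4 : a = 1 ∨ a = 2 := by omega
        rcases h4 with rfl | rfl
        · obtain rfl : t = 0 := by omega
          obtain rfl : c = 6 := by omega
          exact HS_base_card 0
        · have : t = 0 ∨ t = -1 := by omega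
          rcases this with rfl | rfl
          · obtain rfl : c = 3 := by omega
            exact HS_base_card 1
          · obtain rfl : c = 3 := by omega
            exact HS_base_card 2
    intro a t c ham ha hd
    -- choose k
    obtain ⟨k, hk1, hk2⟩ : ∃ k : ℤ, -a < 2 * (t + k * a) + 1 ∧ 2 * (t + k * a) + 1 ≤ a := by
      have e1 := Int.emod_add_mul_ediv (2 * t + 1 + a - 1) (2 * a)
      have e2 := Int.emod_nonneg (2 * t + 1 + a - 1) (b := 2 * a) (by omega)
      have e3 := Int.emod_lt_of_pos (2 * t + 1 + a - 1) (b := 2 * a) (by omega)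
      refine ⟨-((2 * t + 1 + a - 1) / (2 * a)), ?_, ?_⟩ <;> nlinarith
    rw [HS_shift a t c k]
    exact main a _ _ ham ha (by linear_combination hd) hk1 hk2

/-- primitive representations of `m` by the three forms -/
def PS (m : ℤ) : Set (Fin 3 × ℤ × ℤ) := {p | IsCoprime p.2.1 p.2.2 ∧ fv p.1 p.2.1 p.2.2 = m}

/-- the residues `t` modulo `m` with `m ∣ t² + t + 6` -/
def RS (m : ℕ) : Finset ℕ := (Finset.range m).filter (fun t => m ∣ t ^ 2 + t + 6)

theorem tv_shift (e : Fin 3) (x y z w k : ℤ) :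
    tv e x y (z + k * x) (w + k * y) = tv e x y z w + k * fv e x y := by
  simp only [fv, tv]; ring

theorem PS_card (m : ℕ) (hm : 0 < m) : Nat.card (PS m) = 2 * (RS m).card := by
  have h1 : Nat.card (Σ t : RS m, HS (m : ℤ) ((t : ℕ) : ℤ) ((((t : ℕ) : ℤ) ^ 2 + (t : ℕ) + 6) / m))
      = 2 * (RS m).card := by
    have hc : ∀ t : RS m,
        Nat.card (HS (m : ℤ) ((t : ℕ) : ℤ) ((((t : ℕ) : ℤ) ^ 2 + (t : ℕ) + 6) / m)) = 2 := by
      rintro ⟨t, ht⟩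
      simp only [RS, Finset.mem_filter, Finset.mem_range] at ht
      refine HS_card m _ _ _ rfl (by exact_mod_cast hm) ?_
      apply Int.mul_ediv_cancel'
      exact_mod_cast ht.2
    have : ∀ t : RS m,
        Finite (HS (m : ℤ) ((t : ℕ) : ℤ) ((((t : ℕ) : ℤ) ^ 2 + (t : ℕ) + 6) / m)) := fun t =>
      Nat.finite_of_card_ne_zero (by rw [hc t]; norm_num)
    rw [Nat.card_sigma, Finset.sum_congr rfl (fun t _ => hc t)]
    simp [mul_comm]
  rw [← h1]
  symm
  have hm' : (0 : ℤ) < m := by exact_mod_cast hm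
  refine Nat.card_eq_of_bijective (fun q => ⟨(q.2.1.1, q.2.1.2.1, q.2.1.2.2.1), ?_⟩) ⟨?_, ?_⟩
  · obtain ⟨t, ⟨⟨e, x, y, z, w⟩, h⟩⟩ := q
    rw [mem_HS] at h
    refine ⟨⟨w, -z, ?_⟩, h.2.1⟩
    simp only
    linarith [h.1]
  · rintro ⟨⟨t, ht⟩, ⟨⟨e, x, y, z, w⟩, h⟩⟩ ⟨⟨t', ht'⟩, ⟨⟨e', x', y', z', w'⟩, h'⟩⟩ heq
    simp only [Subtype.mk.injEq, Prod.mk.injEq] at heq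
    obtain ⟨rfl, rfl, rfl⟩ := heq
    have g := h
    have g' := h'
    rw [mem_HS] at g g'
    simp only [RS, Finset.mem_filter, Finset.mem_range] at ht ht'
    obtain ⟨g1, g2, g3, g4⟩ := g
    obtain ⟨g1', g2', g3', g4'⟩ := g'
    have hz : z' = z + (w * z' - z * w') * x := by linear_combination (-z') * g1 + z * g1'
    have hw : w' = w + (w * z' - z * w') * y := by linear_combination (-w') * g1 + w * g1'
    have hk : w * z' - z * w' = 0 := by
      have hs := tv_shift e x y z w (w * z' - z * w')
      rw [← hz, ← hw, g2, g3, g3'] at hs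
      generalize w * z' - z * w' = k at *
      simp only at hs
      have l1 : (t : ℤ) < m := by exact_mod_cast ht.1
      have l2 : (t' : ℤ) < m := by exact_mod_cast ht'.1
      by_contra hne
      rcases lt_or_gt_of_ne hne with h0 | h0 <;> nlinarith
    rw [hk] at hz hw
    simp only [zero_mul, add_zero] at hz hw
    subst hz hw
    have : t = t' := by
      have : (t : ℤ) = t' := by rw [← g3, ← g3']
      exact_mod_cast this
    subst this
    rfl
  · rintro ⟨⟨e, x, y⟩, ⟨u, v, huv⟩, hf⟩
    simp only at huv hf
    -- Bezout: x * u + y * v = 1, z = -v, w = u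
    set t0 := tv e x y (-v) u with ht0
    set k := -(t0 / (m : ℤ)) with hk
    have hdet : x * (u + k * y) - y * (-v + k * x) = 1 := by linear_combination huv
    have htv : tv e x y (-v + k * x) (u + k * y) = t0 % m := by
      rw [tv_shift, hf, ← ht0, hk, Int.emod_def]; ring
    have hnn := Int.emod_nonneg t0 hm'.ne'
    have hlt := Int.emod_lt_of_pos t0 hm'
    have hd := key_disc e x y (-v + k * x) (u + k * y) hdet
    rw [htv, hf] at hd
    obtain ⟨t, ht⟩ := Int.eq_ofNat_of_zero_le hnn
    rw [ht] at hd htv hlt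
    refine ⟨⟨⟨t, ?_⟩, ⟨(e, x, y, -v + k * x, u + k * y), ?_⟩⟩, rfl⟩
    · simp only [RS, Finset.mem_filter, Finset.mem_range]
      refine ⟨by exact_mod_cast hlt, ?_⟩
      have : (m : ℤ) ∣ (t : ℤ) ^ 2 + t + 6 := ⟨_, hd.symm⟩
      exact_mod_cast this
    · rw [mem_HS]
      refine ⟨hdet, hf, htv, ?_⟩
      simp only
      rw [← hd, Int.mul_ediv_cancel_left _ hm'.ne']

/-- all representations of `n` by the three forms -/
def ES (n : ℤ) : Set (Fin 3 × ℤ × ℤ) := {p | fv p.1 p.2.1 p.2.2 = n}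

theorem ES_finite (n : ℕ) : (ES n).Finite := by
  refine Set.Finite.subset (s := (Set.univ ×ˢ (Set.Icc (-(24 * n : ℤ)) (24 * n) ×ˢ
    Set.Icc (-(24 * n : ℤ)) (24 * n)))) ?_ ?_
  · exact Set.finite_univ.prod ((Set.finite_Icc _ _).prod (Set.finite_Icc _ _))
  · rintro ⟨e, x, y⟩ h
    have h : fv e x y = n := h
    have h1 : 23 * y ^ 2 ≤ 8 * n := by
      fin_cases e <;> simp [fv, ca, ch, cc] at h
      · nlinarith [sq_nonneg (2 * x + y), sq_nonneg y]
      · nlinarith [sq_nonneg (4 * x + y), sq_nonneg y]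
      · nlinarith [sq_nonneg (4 * x - y), sq_nonneg y]
    have h2 : 23 * x ^ 2 ≤ 24 * n := by
      fin_cases e <;> simp [fv, ca, ch, cc] at h
      · nlinarith [sq_nonneg (12 * y + x), sq_nonneg x]
      · nlinarith [sq_nonneg (6 * y + x), sq_nonneg x]
      · nlinarith [sq_nonneg (6 * y - x), sq_nonneg x]
    simp only [Set.mem_prod, Set.mem_univ, true_and, Set.mem_Icc]
    refine ⟨⟨?_, ?_⟩, ?_, ?_⟩ <;> nlinarith

theorem PS_finite (n : ℕ) : (PS n).Finite := (ES_finite n).subset (fun _ h => h.2)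

theorem fv_smul (e : Fin 3) (s x y : ℤ) : fv e (s * x) (s * y) = s ^ 2 * fv e x y := by
  simp only [fv]; ring

theorem ES_card (n : ℕ) (hn : 0 < n) : Nat.card (ES n) =
    ∑ q ∈ n.divisorsAntidiagonal with IsSquare q.1, Nat.card (PS (q.2 : ℕ)) := by
  have : ∀ q : {q // q ∈ n.divisorsAntidiagonal.filter (fun q => IsSquare q.1)},
      Finite (PS (q.1.2 : ℕ)) := fun q => PS_finite _
  rw [← Finset.sum_coe_sort, ← Nat.card_sigma]
  symm
  refine Nat.card_eq_of_bijective (fun p => ⟨(p.2.1.1, (Nat.sqrt p.1.1.1 : ℤ) * p.2.1.2.1,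
    (Nat.sqrt p.1.1.1 : ℤ) * p.2.1.2.2), ?_⟩) ⟨?_, ?_⟩
  · obtain ⟨⟨⟨d, m⟩, hq⟩, ⟨⟨e, x, y⟩, hc, hf⟩⟩ := p
    simp only [Finset.mem_filter, Nat.mem_divisorsAntidiagonal] at hq
    obtain ⟨⟨hdm, -⟩, s, hs⟩ := hq
    simp only at hf
    change fv e _ _ = n
    simp only
    rw [fv_smul, hf, hs, Nat.sqrt_eq, ← hdm, hs]
    push_cast; ring
  · rintro ⟨⟨⟨d, m⟩, hq⟩, ⟨⟨e, x, y⟩, hc, hf⟩⟩ ⟨⟨⟨d', m'⟩, hq'⟩, ⟨⟨e', x', y'⟩, hc', hf'⟩⟩ heq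
    have hq1 := hq
    have hq1' := hq'
    simp only [Finset.mem_filter, Nat.mem_divisorsAntidiagonal] at hq1 hq1'
    obtain ⟨⟨hdm, -⟩, s, hs⟩ := hq1
    obtain ⟨⟨hdm', -⟩, s', hs'⟩ := hq1'
    simp only [Subtype.mk.injEq, Prod.mk.injEq] at heq
    obtain ⟨rfl, hx, hy⟩ := heq
    simp only at hc hc' hf hf'
    rw [hs, hs', Nat.sqrt_eq, Nat.sqrt_eq] at hx hy
    have hss : s = s' := by
      have e1 : Int.gcd (s * x) (s * y) = s := by
        rw [Int.gcd_mul_left, Int.isCoprime_iff_gcd_eq_one.mp hc]; simp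
      have e2 : Int.gcd (s' * x') (s' * y') = s' := by
        rw [Int.gcd_mul_left, Int.isCoprime_iff_gcd_eq_one.mp hc']; simp
      rw [← e1, ← e2, hx, hy]
    subst hss
    have hs0 : s ≠ 0 := by
      rintro rfl
      simp [hs] at hdm
      omega
    have hs1 : (s : ℤ) ≠ 0 := by exact_mod_cast hs0
    have hx := mul_left_cancel₀ hs1 hx
    have hy := mul_left_cancel₀ hs1 hy
    have hdd : d = d' := by rw [hs, hs']
    have hmm : m = m' := by
      have : (m : ℤ) = m' := by rw [← hf, ← hf', hx, hy]
      exact_mod_cast this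
    subst hdd hmm hx hy
    rfl
  · rintro ⟨⟨e, x, y⟩, hf⟩
    have hf : fv e x y = n := hf
    have hg : 0 < Int.gcd x y := by
      rw [Nat.pos_iff_ne_zero]
      intro h0
      rw [Int.gcd_eq_zero_iff] at h0
      rw [h0.1, h0.2] at hf
      simp [fv] at hf
      omega
    obtain ⟨x', y', hc, hx, hy⟩ := Int.exists_gcd_one hg
    set s := Int.gcd x y with hs
    have hx2 : x = s * x' := by rw [hx]; ring
    have hy2 : y = s * y' := by rw [hy]; ring
    rw [hx2, hy2, fv_smul] at hf
    have hpos : 0 ≤ fv e x' y' := by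
      by_contra hcon
      have : (0 : ℤ) < (s : ℤ) ^ 2 := by positivity
      have : (0 : ℤ) < n := by exact_mod_cast hn
      nlinarith
    obtain ⟨m, hm⟩ := Int.eq_ofNat_of_zero_le hpos
    refine ⟨⟨⟨(s * s, m), ?_⟩, ⟨(e, x', y'), ?_⟩⟩, ?_⟩
    · simp only [Finset.mem_filter, Nat.mem_divisorsAntidiagonal]
      refine ⟨⟨?_, hn.ne'⟩, s, rfl⟩
      rw [hm] at hf
      have : (s : ℤ) * s * m = n := by rw [← hf]; ring
      exact_mod_cast this
    · exact ⟨Int.isCoprime_iff_gcd_eq_one.mpr hc, hm⟩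
    · simp only [Subtype.mk.injEq, Prod.mk.injEq, Nat.sqrt_eq, true_and]
      exact ⟨hx2.symm, hy2.symm⟩

theorem RS_card_zmod (m : ℕ) [NeZero m] :
    (RS m).card = Nat.card {t : ZMod m // t ^ 2 + t + 6 = 0} := by
  rw [← Nat.card_eq_finsetCard]
  symm
  refine Nat.card_eq_of_bijective (fun t => ⟨t.1.val, ?_⟩) ⟨?_, ?_⟩
  · obtain ⟨t, ht⟩ := t
    simp only [RS, Finset.mem_filter, Finset.mem_range]
    refine ⟨ZMod.val_lt t, ?_⟩
    rw [← ZMod.natCast_eq_zero_iff]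
    push_cast
    rw [ZMod.natCast_zmod_val]
    exact ht
  · rintro ⟨t, ht⟩ ⟨s, hs⟩ h
    simp only [Subtype.mk.injEq] at h
    exact Subtype.ext (ZMod.val_injective m h)
  · rintro ⟨t, ht⟩
    simp only [RS, Finset.mem_filter, Finset.mem_range] at ht
    refine ⟨⟨(t : ZMod m), ?_⟩, ?_⟩
    · rw [← ZMod.natCast_eq_zero_iff] at ht
      exact_mod_cast ht.2
    · simp [ZMod.val_natCast, Nat.mod_eq_of_lt ht.1]

theorem RS_mul (m n : ℕ) (hm : m ≠ 0) (hn : n ≠ 0) (h : m.Coprime n) :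
    (RS (m * n)).card = (RS m).card * (RS n).card := by
  have : NeZero m := ⟨hm⟩
  have : NeZero n := ⟨hn⟩
  rw [RS_card_zmod, RS_card_zmod, RS_card_zmod, ← Nat.card_prod]
  refine Nat.card_congr ?_
  let E := ZMod.chineseRemainder h
  have key : ∀ t : ZMod (m * n), t ^ 2 + t + 6 = 0 ↔
      ((E t).1 ^ 2 + (E t).1 + 6 = 0 ∧ (E t).2 ^ 2 + (E t).2 + 6 = 0) := by
    intro t
    rw [← E.injective.eq_iff, map_zero, map_add, map_add, map_pow, Prod.ext_iff]
    have h6 : E 6 = 6 := map_ofNat E 6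
    rw [h6]
    rfl
  refine (Equiv.subtypeEquiv E.toEquiv (q := fun p : ZMod m × ZMod n =>
    p.1 ^ 2 + p.1 + 6 = 0 ∧ p.2 ^ 2 + p.2 + 6 = 0) (fun t => key t)).trans ?_
  exact Equiv.subtypeProdEquivProd (p := fun t : ZMod m => t ^ 2 + t + 6 = 0)
    (q := fun t : ZMod n => t ^ 2 + t + 6 = 0)

theorem RS_hensel (p k : ℕ) (hp : p.Prime) (h23 : p ≠ 23) :
    (RS (p ^ (k + 1 + 1))).card = (RS (p ^ (k + 1))).card := by
  have hunit : ∀ t : ℤ, (p : ℤ) ∣ t ^ 2 + t + 6 → IsCoprime (2 * t + 1) (p : ℤ) := by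
    intro t ht
    have hpp : Prime (p : ℤ) := Nat.prime_iff_prime_int.mp hp
    rw [isCoprime_comm, Prime.coprime_iff_not_dvd hpp]
    intro hd
    have : (p : ℤ) ∣ ((23 : ℕ) : ℤ) := by
      have := dvd_sub (Dvd.dvd.mul_left ht 4) (Dvd.dvd.mul_left hd (2 * t + 1))
      rwa [show 4 * (t ^ 2 + t + 6) - (2 * t + 1) * (2 * t + 1) = ((23 : ℕ) : ℤ) by
        push_cast; ring] at this
    have := Int.natCast_dvd_natCast.mp this
    exact h23 ((Nat.prime_dvd_prime_iff_eq hp (by norm_num)).mp this)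
  have hpk : 0 < p ^ (k + 1) := pow_pos hp.pos _
  refine Finset.card_nbij (fun t => t % p ^ (k + 1)) ?_ ?_ ?_
  · intro t ht
    simp only [RS, Finset.coe_filter, Finset.mem_range, Set.mem_ofPred_eq] at ht ⊢
    refine ⟨Nat.mod_lt _ hpk, ?_⟩
    have h1 : p ^ (k + 1) ∣ t ^ 2 + t + 6 := (pow_dvd_pow p (by omega)).trans ht.2
    have h2 : (t % p ^ (k + 1)) ^ 2 + t % p ^ (k + 1) + 6 ≡ t ^ 2 + t + 6 [MOD p ^ (k + 1)] := by
      have := Nat.mod_modEq t (p ^ (k + 1))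
      gcongr
    exact (Nat.ModEq.dvd_iff h2 dvd_rfl).mpr h1
  · intro t ht s hs hts
    simp only [RS, Finset.coe_filter, Finset.mem_range, Set.mem_ofPred_eq] at ht hs hts
    have hmod : (p : ℤ) ^ (k + 1) ∣ (t : ℤ) - s := by
      have : t ≡ s [MOD p ^ (k + 1)] := hts
      have := (Nat.modEq_iff_dvd.mp this.symm)
      exact_mod_cast this
    have h1 : (p : ℤ) ^ (k + 1 + 1) ∣ (t : ℤ) ^ 2 + t + 6 := by exact_mod_cast ht.2
    have h2 : (p : ℤ) ^ (k + 1 + 1) ∣ (s : ℤ) ^ 2 + s + 6 := by exact_mod_cast hs.2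
    have h3 : (p : ℤ) ^ (k + 1 + 1) ∣ ((t : ℤ) - s) * (t + s + 1) := by
      have := dvd_sub h1 h2
      rwa [show (t : ℤ) ^ 2 + t + 6 - (s ^ 2 + s + 6) = ((t : ℤ) - s) * (t + s + 1) by
        ring] at this
    have hpt : (p : ℤ) ∣ (t : ℤ) ^ 2 + t + 6 := (dvd_pow_self _ (by omega)).trans h1
    have hc : IsCoprime ((p : ℤ)) (t + s + 1) := by
      obtain ⟨q, hq⟩ := (dvd_pow_self (p : ℤ) (by omega : k + 1 ≠ 0)).trans hmod
      have : (t + s + 1 : ℤ) = (2 * t + 1) + p * (-q) := by linear_combination (-1) * hq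
      rw [this]
      exact ((hunit t hpt).symm).add_mul_left_right _
    have h4 : (p : ℤ) ^ (k + 1 + 1) ∣ (t : ℤ) - s := (hc.pow_left).dvd_of_dvd_mul_right h3
    have h5 : s ≡ t [MOD p ^ (k + 1 + 1)] := by
      rw [Nat.modEq_iff_dvd]; exact_mod_cast h4
    exact (Nat.ModEq.eq_of_lt_of_lt h5 hs.1 ht.1).symm
  · intro t ht
    simp only [RS, Finset.coe_filter, Finset.mem_range, Set.mem_ofPred_eq] at ht
    obtain ⟨ht1, u, hu⟩ := ht
    have hpt : (p : ℤ) ∣ (t : ℤ) ^ 2 + t + 6 := by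
      have : p ∣ t ^ 2 + t + 6 := (dvd_pow_self p (by omega : k + 1 ≠ 0)).trans ⟨u, hu⟩
      exact_mod_cast this
    obtain ⟨α, β, hab⟩ := hunit t hpt
    -- α (2t+1) ≡ 1, so take j ≡ -u α
    have hp0 : (0 : ℤ) < p := by exact_mod_cast hp.pos
    obtain ⟨j, hj⟩ := Int.eq_ofNat_of_zero_le (Int.emod_nonneg (-(u : ℤ) * α) hp0.ne')
    have hjlt := Int.emod_lt_of_pos (-(u : ℤ) * α) hp0
    rw [hj] at hjlt
    have hjlt : j < p := by exact_mod_cast hjlt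
    have hjd := Int.emod_add_mul_ediv (-(u : ℤ) * α) p
    rw [hj] at hjd
    refine ⟨t + j * p ^ (k + 1), ?_, ?_⟩
    · simp only [RS, Finset.coe_filter, Finset.mem_range, Set.mem_ofPred_eq]
      refine ⟨?_, ?_⟩
      · calc t + j * p ^ (k + 1) < p ^ (k + 1) + j * p ^ (k + 1) := by omega
          _ = (j + 1) * p ^ (k + 1) := by ring
          _ ≤ p * p ^ (k + 1) := Nat.mul_le_mul_right _ hjlt
          _ = p ^ (k + 1 + 1) := by ring
      · have hu' : (t : ℤ) ^ 2 + t + 6 = p ^ (k + 1) * u := by exact_mod_cast hu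
        have : (p : ℤ) ^ (k + 1 + 1) ∣
            ((t : ℤ) + j * p ^ (k + 1)) ^ 2 + (t + j * p ^ (k + 1)) + 6 := by
          have e1 : ((t : ℤ) + j * p ^ (k + 1)) ^ 2 + (t + j * p ^ (k + 1)) + 6
            = p ^ (k + 1) * (u + j * (2 * t + 1) + p * (j ^ 2 * p ^ k)) := by
            linear_combination hu'
          rw [e1, pow_succ]
          refine mul_dvd_mul_left _ (dvd_add ?_ (dvd_mul_right _ _))
          generalize (-(u : ℤ) * α) / p = r at hjd
          refine ⟨u * β - r * (2 * t + 1), ?_⟩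
          linear_combination (2 * (t : ℤ) + 1) * hjd - u * hab
        exact_mod_cast this
    · simp only [Nat.add_mul_mod_self_right]
      exact Nat.mod_eq_of_lt ht1

theorem RS_23 (k : ℕ) : (RS (23 ^ (k + 1 + 1))).card = 0 := by
  rw [Finset.card_eq_zero, Finset.eq_empty_iff_forall_notMem]
  intro t ht
  simp only [RS, Finset.mem_filter, Finset.mem_range] at ht
  have h1 : 529 ∣ t ^ 2 + t + 6 := by
    refine Dvd.dvd.trans ?_ ht.2
    rw [show (529 : ℕ) = 23 ^ 2 by norm_num]
    exact pow_dvd_pow _ (by omega)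
  have h2 : (t ^ 2 + t + 6) % 23 = 0 := by omega
  have h3 : t % 23 = 11 := by
    have : t % 23 < 23 := Nat.mod_lt _ (by norm_num)
    generalize hr : t % 23 = r at *
    rw [Nat.add_mod, Nat.add_mod (t ^ 2), Nat.pow_mod, hr] at h2
    interval_cases r <;> simp_all
  obtain ⟨q, rfl⟩ : ∃ q, t = 23 * q + 11 := ⟨t / 23, by omega⟩
  ring_nf at h1
  omega

theorem kron_mul (a : ℤ) (m n : ℕ) (hm : m ≠ 0) (hn : n ≠ 0) :
    kron a (m * n) = kron a m * kron a n := by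
  have h1 : NeZero (m / 2 ^ m.factorization 2) := ⟨(Nat.ordCompl_pos 2 hm).ne'⟩
  have h2 : NeZero (n / 2 ^ n.factorization 2) := ⟨(Nat.ordCompl_pos 2 hn).ne'⟩
  unfold kron
  rw [Nat.ordCompl_mul, jacobiSym.mul_right, Nat.factorization_mul hm hn]
  simp only [Finsupp.add_apply, pow_add]
  ring

theorem kron_odd (a : ℤ) (n : ℕ) (h : Odd n) : kron a n = jacobiSym a n := by
  have : n.factorization 2 = 0 := Nat.factorization_eq_zero_of_not_dvd (by
    rw [← even_iff_two_dvd, Nat.not_even_iff_odd]; exact h)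
  simp [kron, this]

theorem kron_one (a : ℤ) : kron a 1 = 1 := by
  rw [kron_odd _ _ odd_one]; simp

theorem kron_two : kron (-23) 2 = 1 := by
  unfold kron
  have : (2 : ℕ).factorization 2 = 1 := by simp [Nat.prime_two.factorization]
  rw [this]
  norm_num

theorem kron_two' : kron 69 2 = -1 := by
  unfold kron
  have : (2 : ℕ).factorization 2 = 1 := by simp [Nat.prime_two.factorization]
  rw [this]
  norm_num

theorem kron_pow (a : ℤ) (p k : ℕ) (hp : p ≠ 0) : kron a (p ^ k) = kron a p ^ k := by
  induction k with
  | zero => simp [kron_one]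
  | succ k ih => rw [pow_succ, kron_mul _ _ _ (pow_ne_zero _ hp) hp, ih, pow_succ]

theorem RS_prime (p : ℕ) (hp : p.Prime) : ((RS p).card : ℤ) = kron (-23) p + 1 := by
  rcases hp.eq_two_or_odd' with rfl | hodd
  · rw [kron_two]; decide
  · have : Fact p.Prime := ⟨hp⟩
    have hp2 : p ≠ 2 := by rintro rfl; exact absurd hodd (by decide)
    rw [kron_odd _ _ hodd, ← jacobiSym.legendreSym.to_jacobiSym, ← legendreSym.card_sqrts p hp2,
      RS_card_zmod, Set.toFinset_card, ← Nat.card_eq_fintype_card]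
    norm_cast
    have h2 : (2 : ZMod p) ≠ 0 := by
      intro h
      have : ((2 : ℕ) : ZMod p) = 0 := by exact_mod_cast h
      rw [ZMod.natCast_eq_zero_iff] at this
      exact hp2 ((Nat.prime_dvd_prime_iff_eq hp Nat.prime_two).mp this)
    refine Nat.card_eq_of_bijective (fun t => ⟨2 * t.1 + 1, ?_⟩) ⟨?_, ?_⟩
    · have := t.2
      simp only [Set.mem_ofPred_eq]
      push_cast
      linear_combination 4 * this
    · rintro ⟨t, ht⟩ ⟨s, hs⟩ h
      simp only [Subtype.mk.injEq] at h ⊢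
      exact mul_left_cancel₀ h2 (add_right_cancel h)
    · rintro ⟨x, hx⟩
      simp only [Set.mem_ofPred_eq] at hx
      push_cast at hx
      have e : 2 * ((x - 1) * (2 : ZMod p)⁻¹) + 1 = x := by field_simp; ring
      refine ⟨⟨(x - 1) * 2⁻¹, ?_⟩, ?_⟩
      · have h4 : (4 : ZMod p) ≠ 0 := by
          have : (4 : ZMod p) = 2 * 2 := by norm_num
          rw [this]; exact mul_ne_zero h2 h2
        apply mul_left_cancel₀ h4
        generalize (x - 1) * (2 : ZMod p)⁻¹ = y at e
        subst e
        linear_combination hx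
      · simp only [Subtype.mk.injEq]
        exact e

theorem kron_23_sq (p : ℕ) (hp : p.Prime) (h : p ≠ 23) :
    kron (-23) p = 1 ∨ kron (-23) p = -1 := by
  rcases hp.eq_two_or_odd' with rfl | hodd
  · left; exact kron_two
  · rw [kron_odd _ _ hodd]
    rcases jacobiSym.trichotomy (-23) p with h0 | h0 | h0
    · have : Fact p.Prime := ⟨hp⟩
      rw [← jacobiSym.legendreSym.to_jacobiSym, legendreSym.eq_zero_iff,
        ZMod.intCast_zmod_eq_zero_iff_dvd, Int.dvd_neg] at h0
      have h0 : p ∣ 23 := by exact_mod_cast h0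
      exact absurd ((Nat.prime_dvd_prime_iff_eq hp (by norm_num)).mp h0) h
    · left; exact h0
    · right; exact h0

theorem kron_23_23 : kron (-23) 23 = 0 := by
  rw [kron_odd _ _ (by decide)]
  norm_num

theorem RS_prime_pow (p k : ℕ) (hp : p.Prime) :
    ((RS (p ^ (k + 1))).card : ℤ) = kron (-23) p ^ (k + 1) + kron (-23) p ^ k := by
  by_cases h : p = 23
  · subst h
    cases k with
    | zero => rw [zero_add, pow_one, RS_prime 23 hp]; simp
    | succ k => rw [RS_23, kron_23_23]; simp
  · have h1 : ∀ k, (RS (p ^ (k + 1))).card = (RS p).card := by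
      intro k
      induction k with
      | zero => simp
      | succ k ih => rw [RS_hensel p k hp h, ih]
    rw [h1, RS_prime p hp]
    rcases kron_23_sq p hp h with h2 | h2 <;> rw [h2]
    · simp
    · rw [pow_succ]; ring

/-- indicator of the nonzero squares -/
noncomputable def sqf : ArithmeticFunction ℤ :=
  ⟨fun n => if n ≠ 0 ∧ IsSquare n then 1 else 0, by simp⟩

/-- number of roots of `t² + t + 6` modulo `n` -/
noncomputable def rootf : ArithmeticFunction ℤ :=
  ⟨fun n => ((RS n).card : ℤ), by simp [RS]⟩

/-- the Kronecker symbol of `-23` -/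
noncomputable def chif : ArithmeticFunction ℤ :=
  ⟨fun n => if n = 0 then 0 else kron (-23) n, by simp⟩

theorem sqf_apply (n : ℕ) : sqf n = if n ≠ 0 ∧ IsSquare n then 1 else 0 := rfl
theorem rootf_apply (n : ℕ) : rootf n = ((RS n).card : ℤ) := rfl
theorem chif_apply (n : ℕ) : chif n = if n = 0 then 0 else kron (-23) n := rfl

theorem isSquare_mul_coprime (m n : ℕ) (h : m.Coprime n) :
    IsSquare (m * n) ↔ IsSquare m ∧ IsSquare n := by
  constructor
  · rintro ⟨c, hc⟩
    rw [← pow_two] at hc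
    refine ⟨?_, ?_⟩
    · obtain ⟨d, hd⟩ := exists_eq_pow_of_mul_eq_pow (a := m) (b := n)
        (by rw [Nat.isUnit_iff]; exact h) hc
      exact ⟨d, by rw [hd, pow_two]⟩
    · rw [mul_comm] at hc
      obtain ⟨d, hd⟩ := exists_eq_pow_of_mul_eq_pow (a := n) (b := m)
        (by rw [Nat.isUnit_iff]; exact h.symm) hc
      exact ⟨d, by rw [hd, pow_two]⟩
  · rintro ⟨h1, h2⟩
    exact h1.mul h2

theorem sqf_mult : sqf.IsMultiplicative := by
  rw [ArithmeticFunction.IsMultiplicative.iff_ne_zero]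
  refine ⟨by simp [sqf_apply], ?_⟩
  intro m n hm hn h
  simp only [sqf_apply, isSquare_mul_coprime m n h]
  by_cases h1 : IsSquare m <;> by_cases h2 : IsSquare n <;> simp [h1, h2, hm, hn]

theorem rootf_mult : rootf.IsMultiplicative := by
  rw [ArithmeticFunction.IsMultiplicative.iff_ne_zero]
  refine ⟨by rw [rootf_apply]; decide, ?_⟩
  intro m n hm hn h
  simp only [rootf_apply, RS_mul m n hm hn h]
  push_cast; rfl

theorem chif_mult : chif.IsMultiplicative := by
  rw [ArithmeticFunction.IsMultiplicative.iff_ne_zero]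
  refine ⟨by simp [chif_apply, kron_one], ?_⟩
  intro m n hm hn h
  simp [chif_apply, hm, hn, kron_mul]

theorem zeta_chif_pow (p k : ℕ) (hp : p.Prime) :
    ((ArithmeticFunction.zeta : ArithmeticFunction ℤ) * chif) (p ^ k) =
      ∑ i ∈ Finset.range (k + 1), kron (-23) p ^ i := by
  rw [ArithmeticFunction.coe_zeta_mul_apply, Nat.sum_divisors_prime_pow hp]
  refine Finset.sum_congr rfl fun i _ => ?_
  rw [chif_apply, if_neg (pow_ne_zero _ hp.ne_zero), kron_pow _ _ _ hp.ne_zero]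

theorem sqf_pow (p i : ℕ) (hp : p.Prime) : sqf (p ^ i) = if Even i then 1 else 0 := by
  rw [sqf_apply]
  have : IsSquare (p ^ i) ↔ Even i := by
    constructor
    · rintro ⟨r, hr⟩
      have hr0 : r ≠ 0 := by
        rintro rfl
        exact pow_ne_zero i hp.ne_zero (by simpa using hr)
      have := congrArg (fun n => n.factorization p) hr
      simp only [Nat.factorization_mul hr0 hr0, hp.factorization_pow] at this
      simp at this
      exact ⟨_, this⟩
    · intro h
      exact h.isSquare_pow p
  simp [this, hp.ne_zero]

theorem sqf_rootf_pow (p k : ℕ) (hp : p.Prime) : (sqf * rootf) (p ^ k) =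
    ∑ i ∈ Finset.range (k + 1), (if Even i then 1 else 0) * ((RS (p ^ (k - i))).card : ℤ) := by
  rw [ArithmeticFunction.mul_apply,
    Nat.sum_divisorsAntidiagonal (fun a b => sqf a * rootf b), Nat.sum_divisors_prime_pow hp]
  refine Finset.sum_congr rfl fun i hi => ?_
  rw [sqf_pow p i hp, rootf_apply, Nat.pow_div (by simp at hi; omega) hp.pos]

theorem sqf_rootf : sqf * rootf = (ArithmeticFunction.zeta : ArithmeticFunction ℤ) * chif := by
  rw [ArithmeticFunction.IsMultiplicative.eq_iff_eq_on_prime_powers _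
    (sqf_mult.mul rootf_mult) _ (ArithmeticFunction.isMultiplicative_zeta.natCast.mul chif_mult)]
  intro p k hp
  rw [zeta_chif_pow p k hp]
  induction k using Nat.twoStepInduction with
  | zero =>
    rw [sqf_rootf_pow p 0 hp]
    have : (RS 1).card = 1 := by decide
    rw [zero_add, Finset.sum_range_one, Finset.sum_range_one]
    simp [this]
  | one =>
    rw [sqf_rootf_pow p 1 hp, Finset.sum_range_succ, Finset.sum_range_succ, Finset.sum_range_succ]
    have := RS_prime_pow p 0 hp
    simp at this ⊢
    rw [this]; ring
  | more k ih _ =>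
    rw [sqf_rootf_pow p (k + 2) hp, Finset.sum_range_succ', Finset.sum_range_succ']
    have h1 : ∑ i ∈ Finset.range (k + 1), (if Even (i + 1 + 1) then (1 : ℤ) else 0) *
        ((RS (p ^ (k + 2 - (i + 1 + 1)))).card : ℤ) =
        ∑ i ∈ Finset.range (k + 1), (if Even i then 1 else 0) *
        ((RS (p ^ (k - i))).card : ℤ) := by
      refine Finset.sum_congr rfl fun i hi => ?_
      rw [show k + 2 - (i + 1 + 1) = k - i by omega]
      simp [Nat.even_add_one]
    rw [h1, ← sqf_rootf_pow p k hp, ih, Finset.sum_range_succ _ (k + 2),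
      Finset.sum_range_succ _ (k + 1)]
    have := RS_prime_pow p (k + 1) hp
    simp at this ⊢
    rw [this]; ring

theorem A_eq (n : ℕ) : A n = ((ArithmeticFunction.zeta : ArithmeticFunction ℤ) * chif) n := by
  rw [ArithmeticFunction.coe_zeta_mul_apply, A]
  refine Finset.sum_congr rfl fun d hd => ?_
  rw [chif_apply, if_neg (Nat.pos_of_mem_divisors hd).ne']

theorem ES_card_A (n : ℕ) (hn : 0 < n) : (Nat.card (ES n) : ℤ) = 2 * A n := by
  rw [ES_card n hn, A_eq, ← sqf_rootf, ArithmeticFunction.mul_apply, Finset.sum_filter,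
    Finset.mul_sum]
  push_cast
  refine Finset.sum_congr rfl fun q hq => ?_
  rw [Nat.mem_divisorsAntidiagonal] at hq
  have h1 : q.1 ≠ 0 := by rintro h; apply hq.2; rw [← hq.1, h, zero_mul]
  have h2 : q.2 ≠ 0 := by rintro h; apply hq.2; rw [← hq.1, h, mul_zero]
  rw [sqf_apply, rootf_apply, PS_card _ (Nat.pos_of_ne_zero h2)]
  by_cases h : IsSquare q.1 <;> simp [h, h1]

theorem A_three (k m : ℕ) (h : ¬ 3 ∣ m) : A (3 ^ k * m) = (k + 1) * A m := by
  have hc : Nat.Coprime (3 ^ k) m := Nat.Coprime.pow_left _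
    ((Nat.Prime.coprime_iff_not_dvd Nat.prime_three).mpr h)
  have h3 : kron (-23) 3 = 1 := by
    rw [kron_odd _ _ (by decide)]; norm_num
  rw [A_eq, A_eq, (ArithmeticFunction.isMultiplicative_zeta.natCast.mul
    chif_mult).map_mul_of_coprime hc, zeta_chif_pow 3 k Nat.prime_three, h3]
  simp

theorem jac_three (m : ℕ) (h : Odd m) : jacobiSym (-3) m = legendreSym 3 (m : ℤ) := by
  rw [jacobiSym.mod_right _ h, legendreSym.mod]
  have h1 : m % 12 < 12 := Nat.mod_lt _ (by norm_num)
  have h2 : ((m : ℤ) % (3 : ℕ)) = ((m % 12 % 3 : ℕ) : ℤ) := by push_cast; omega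
  have h3 : m % 12 % 2 = 1 := by rw [Nat.odd_iff] at h; omega
  rw [h2, show (4 * (-3 : ℤ).natAbs) = 12 by norm_num]
  generalize m % 12 = r at *
  interval_cases r <;> first | omega | norm_num

theorem kron_69 (d : ℕ) (hd : d ≠ 0) : kron 69 d = kron (-23) d * legendreSym 3 (d : ℤ) := by
  obtain ⟨k, m, hm, rfl⟩ := Nat.exists_eq_two_pow_mul_odd hd
  have hm0 : m ≠ 0 := by rintro rfl; simp at hm
  have h2 : legendreSym 3 2 = -1 := by norm_num
  have hl : legendreSym 3 (((2 ^ k * m : ℕ)) : ℤ) = (-1) ^ k * legendreSym 3 (m : ℤ) := by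
    push_cast
    rw [legendreSym.mul, ← h2]
    congr 1
    exact map_pow (legendreSym.hom 3) 2 k
  rw [hl, kron_mul _ _ _ (by positivity) hm0, kron_mul _ _ _ (by positivity) hm0,
    kron_pow _ _ _ two_ne_zero, kron_pow _ _ _ two_ne_zero, kron_two, kron_two',
    kron_odd _ _ hm, kron_odd _ _ hm, ← jac_three m hm,
    show (69 : ℤ) = (-23) * (-3) by norm_num, jacobiSym.mul_left]
  ring

theorem B_eq (n : ℕ) : B n = legendreSym 3 (n : ℤ) * A n := by
  rw [B, A, Finset.mul_sum]
  refine Finset.sum_congr rfl fun d hd => ?_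
  have hd0 := (Nat.pos_of_mem_divisors hd).ne'
  have hdn := Nat.dvd_of_mem_divisors hd
  rw [kron_69 d hd0, mul_assoc, ← legendreSym.mul, ← Nat.cast_mul, Nat.mul_div_cancel' hdn,
    mul_comm]

/-- representations of `n` by `x² + xy + 6y²` -/
abbrev F0 (n : ℤ) : Type := {v : ℤ × ℤ // v.1 ^ 2 + v.1 * v.2 + 6 * v.2 ^ 2 = n}

/-- representations of `n` by `2x² + xy + 3y²` -/
abbrev F1 (n : ℤ) : Type := {v : ℤ × ℤ // 2 * v.1 ^ 2 + v.1 * v.2 + 3 * v.2 ^ 2 = n}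

theorem ES_split (n : ℕ) : Nat.card (ES n) = Nat.card (F0 n) + 2 * Nat.card (F1 n) := by
  have hfin : ∀ e : Fin 3, Finite {v : ℤ × ℤ // fv e v.1 v.2 = n} := by
    intro e
    have : Finite (ES n) := ES_finite n
    refine Finite.of_injective
      (fun v => (⟨(e, v.1.1, v.1.2), v.2⟩ : ES n)) ?_
    rintro ⟨⟨x, y⟩, h⟩ ⟨⟨x', y'⟩, h'⟩ heq
    have := congrArg Subtype.val heq
    simpa using this
  have h1 : Nat.card (ES n) = Nat.card (Σ e : Fin 3, {v : ℤ × ℤ // fv e v.1 v.2 = n}) := by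
    refine Nat.card_congr ⟨fun p => ⟨p.1.1, ⟨p.1.2, p.2⟩⟩, fun q => ⟨(q.1, q.2.1), q.2.2⟩, ?_, ?_⟩
    · intro p; rfl
    · intro q; rfl
  rw [h1, Nat.card_sigma, Fin.sum_univ_three]
  have e0 : Nat.card {v : ℤ × ℤ // fv 0 v.1 v.2 = n} = Nat.card (F0 n) := by
    refine Nat.card_congr (Equiv.subtypeEquivRight fun v => ?_)
    simp [fv, ca, ch, cc]
  have e1 : Nat.card {v : ℤ × ℤ // fv 1 v.1 v.2 = n} = Nat.card (F1 n) := by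
    refine Nat.card_congr (Equiv.subtypeEquivRight fun v => ?_)
    simp [fv, ca, ch, cc]
  have e2 : Nat.card {v : ℤ × ℤ // fv 2 v.1 v.2 = n} = Nat.card (F1 n) := by
    refine Nat.card_congr (Equiv.subtypeEquiv (Equiv.prodCongr (Equiv.refl ℤ) (Equiv.neg ℤ))
      fun v => ?_)
    simp [fv, ca, ch, cc]
  rw [e0, e1, e2]
  ring

/-- representations of `n` by `x² + xy + 52y²` -/
abbrev G0 (n : ℤ) : Type := {v : ℤ × ℤ // v.1 ^ 2 + v.1 * v.2 + 52 * v.2 ^ 2 = n}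

/-- representations of `n` by `4x² + xy + 13y²` -/
abbrev G1 (n : ℤ) : Type := {v : ℤ × ℤ // 4 * v.1 ^ 2 + v.1 * v.2 + 13 * v.2 ^ 2 = n}

theorem G0_one (n : ℤ) (hn : n % 3 = 1) : Nat.card (G0 n) = Nat.card (F0 n) := by
  refine Nat.card_eq_of_bijective (fun v => ⟨(v.1.1 - v.1.2, 3 * v.1.2), ?_⟩) ⟨?_, ?_⟩
  · obtain ⟨⟨x, y⟩, h⟩ := v
    simp only at h ⊢
    linear_combination h
  · rintro ⟨⟨x, y⟩, h⟩ ⟨⟨x', y'⟩, h'⟩ heq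
    simp only [Subtype.mk.injEq, Prod.mk.injEq] at heq ⊢
    omega
  · rintro ⟨⟨x, y⟩, h⟩
    simp only at h
    have h3 : y % 3 = 0 := by
      have a1 : (x * (x + y)) % 3 = 1 := by
        have : x * (x + y) = n - 3 * (2 * y ^ 2) := by linear_combination h
        omega
      have : x % 3 = 0 ∨ x % 3 = 1 ∨ x % 3 = 2 := by omega
      have : y % 3 = 0 ∨ y % 3 = 1 ∨ y % 3 = 2 := by omega
      rw [Int.mul_emod, Int.add_emod] at a1
      rcases ‹x % 3 = 0 ∨ _› with hx | hx | hx <;> rcases this with hy | hy | hy <;>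
        simp [hx, hy] at a1 ⊢
    obtain ⟨z, rfl⟩ : ∃ z, y = 3 * z := ⟨y / 3, by omega⟩
    refine ⟨⟨(x + z, z), ?_⟩, ?_⟩
    · simp only
      linear_combination h
    · simp

theorem G1_one (n : ℤ) (hn : n % 3 = 1) : Nat.card (G1 n) = Nat.card (F1 n) := by
  refine Nat.card_eq_of_bijective (fun v => ⟨(v.1.1 + 2 * v.1.2, -v.1.1 + v.1.2), ?_⟩) ⟨?_, ?_⟩
  · obtain ⟨⟨x, y⟩, h⟩ := v
    simp only at h ⊢
    linear_combination h
  · rintro ⟨⟨x, y⟩, h⟩ ⟨⟨x', y'⟩, h'⟩ heq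
    simp only [Subtype.mk.injEq, Prod.mk.injEq] at heq ⊢
    omega
  · rintro ⟨⟨x, y⟩, h⟩
    simp only at h
    have h3 : (x + y) % 3 = 0 := by
      have a1 : (x * (2 * x + y)) % 3 = 1 := by
        have : x * (2 * x + y) = n - 3 * (y ^ 2) := by linear_combination h
        omega
      have : x % 3 = 0 ∨ x % 3 = 1 ∨ x % 3 = 2 := by omega
      have : y % 3 = 0 ∨ y % 3 = 1 ∨ y % 3 = 2 := by omega
      rw [Int.mul_emod, Int.add_emod, Int.mul_emod 2] at a1
      rw [Int.add_emod]
      rcases ‹x % 3 = 0 ∨ _› with hx | hx | hx <;> rcases this with hy | hy | hy <;>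
        simp [hx, hy] at a1 ⊢
    obtain ⟨z, hz⟩ : ∃ z, x + y = 3 * z := ⟨(x + y) / 3, by omega⟩
    obtain rfl : y = 3 * z - x := by omega
    refine ⟨⟨(x - 2 * z, z), ?_⟩, ?_⟩
    · simp only
      linear_combination h
    · simp only [Subtype.mk.injEq, Prod.mk.injEq]
      constructor <;> ring

theorem G0_nine (j : ℤ) : Nat.card (F0 j) = Nat.card (G0 (9 * j)) := by
  refine Nat.card_eq_of_bijective (fun v => ⟨(v.1.2 + 3 * v.1.1, v.1.2), ?_⟩) ⟨?_, ?_⟩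
  · obtain ⟨⟨x, y⟩, h⟩ := v
    simp only at h ⊢
    linear_combination 9 * h
  · rintro ⟨⟨x, y⟩, h⟩ ⟨⟨x', y'⟩, h'⟩ heq
    simp only [Subtype.mk.injEq, Prod.mk.injEq] at heq ⊢
    omega
  · rintro ⟨⟨x, y⟩, h⟩
    simp only at h
    have h3 : (3 : ℤ) ∣ x - y := by
      refine Int.prime_three.dvd_of_dvd_pow (n := 2) ⟨3 * j - x * y - 17 * y ^ 2, ?_⟩
      linear_combination h
    obtain ⟨z, hz⟩ := h3
    obtain rfl : x = y + 3 * z := by omega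
    refine ⟨⟨(z, y), ?_⟩, ?_⟩
    · simp only
      have : 9 * (z ^ 2 + z * y + 6 * y ^ 2) = 9 * j := by linear_combination h
      omega
    · rfl

theorem G1_nine (j : ℤ) : Nat.card (F1 j) = Nat.card (G1 (9 * j)) := by
  refine Nat.card_eq_of_bijective (fun v => ⟨(v.1.1 - 2 * v.1.2, v.1.1 + v.1.2), ?_⟩) ⟨?_, ?_⟩
  · obtain ⟨⟨x, y⟩, h⟩ := v
    simp only at h ⊢
    linear_combination 9 * h
  · rintro ⟨⟨x, y⟩, h⟩ ⟨⟨x', y'⟩, h'⟩ heq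
    simp only [Subtype.mk.injEq, Prod.mk.injEq] at heq ⊢
    omega
  · rintro ⟨⟨x, y⟩, h⟩
    simp only at h
    have h3 : (3 : ℤ) ∣ x - y := by
      refine Int.prime_three.dvd_of_dvd_pow (n := 2) ⟨3 * j - x ^ 2 - x * y - 4 * y ^ 2, ?_⟩
      linear_combination h
    obtain ⟨z, hz⟩ := h3
    obtain rfl : x = y + 3 * z := by omega
    refine ⟨⟨(y + z, -z), ?_⟩, ?_⟩
    · simp only
      have : 9 * (2 * (y + z) ^ 2 + (y + z) * -z + 3 * (-z) ^ 2) = 9 * j := by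
        linear_combination h
      omega
    · simp only [Subtype.mk.injEq, Prod.mk.injEq]
      constructor <;> ring

theorem sq_class (n u k : ℤ) (h : u ^ 2 + 3 * k = n) (h9 : 3 ∣ u → 9 ∣ n) :
    n % 3 = 1 ∨ 9 ∣ n := by
  have hu : u % 3 = 0 ∨ u % 3 = 1 ∨ u % 3 = 2 := by omega
  rcases hu with hu | hu | hu
  · exact Or.inr (h9 (Int.dvd_of_emod_eq_zero hu))
  · left
    have : u ^ 2 % 3 = 1 := by rw [pow_two, Int.mul_emod, hu]; rfl
    omega
  · left
    have : u ^ 2 % 3 = 1 := by rw [pow_two, Int.mul_emod, hu]; rfl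
    omega

theorem G0_empty (n : ℤ) (h1 : n % 3 ≠ 1) (h2 : ¬ 9 ∣ n) : Nat.card (G0 n) = 0 := by
  have : IsEmpty (G0 n) := by
    refine ⟨?_⟩
    rintro ⟨⟨x, y⟩, h⟩
    simp only at h
    rcases sq_class n (x - y) (x * y + 17 * y ^ 2) (by linear_combination h) (by
      rintro ⟨z, hz⟩
      obtain rfl : x = y + 3 * z := by omega
      exact ⟨z ^ 2 + z * y + 6 * y ^ 2, by linear_combination -h⟩) with h | h
    · exact h1 h
    · exact h2 h
  exact Nat.card_of_isEmpty

theorem G1_empty (n : ℤ) (h1 : n % 3 ≠ 1) (h2 : ¬ 9 ∣ n) : Nat.card (G1 n) = 0 := by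
  have : IsEmpty (G1 n) := by
    refine ⟨?_⟩
    rintro ⟨⟨x, y⟩, h⟩
    simp only at h
    rcases sq_class n (x - y) (x ^ 2 + x * y + 4 * y ^ 2) (by linear_combination h) (by
      rintro ⟨z, hz⟩
      obtain rfl : x = y + 3 * z := by omega
      exact ⟨2 * (y + z) ^ 2 + (y + z) * -z + 3 * (-z) ^ 2, by linear_combination -h⟩) with h | h
    · exact h1 h
    · exact h2 h
  exact Nat.card_of_isEmpty

theorem stmt_19 :
    ∀ n : ℕ, 0 < n →
      (Nat.card {v : ℤ × ℤ //
          v.1 ^ 2 + v.1 * v.2 + 52 * v.2 ^ 2 = (n : ℤ)} : ℤ) +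
        2 * (Nat.card {v : ℤ × ℤ //
          4 * v.1 ^ 2 + v.1 * v.2 + 13 * v.2 ^ 2 = (n : ℤ)} : ℤ) =
      A n - 2 * (if 3 ∣ n then A (n / 3) else 0) +
        3 * (if 9 ∣ n then A (n / 9) else 0) + B n := by
  intro n hn
  change (Nat.card (G0 n) : ℤ) + 2 * (Nat.card (G1 n) : ℤ) = _
  have main : ∀ m : ℕ, 0 < m →
      (Nat.card (F0 m) : ℤ) + 2 * (Nat.card (F1 m) : ℤ) = 2 * A m := by
    intro m hm
    rw [← ES_card_A m hm, ES_split]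
    push_cast; rfl
  rw [B_eq, legendreSym.mod]
  by_cases h9 : 9 ∣ n
  · have h3 : 3 ∣ n := by omega
    obtain ⟨j, rfl⟩ := h9
    have hj : 0 < j := by omega
    rw [if_pos h3, if_pos (dvd_mul_right 9 j), Nat.mul_div_cancel_left j (by norm_num),
      show 9 * j / 3 = 3 * j by omega]
    have e0 : ((9 * j : ℕ) : ℤ) % (3 : ℕ) = 0 := by push_cast; omega
    rw [e0]
    push_cast
    rw [← G0_nine, ← G1_nine, main j hj]
    have hl : legendreSym 3 0 = 0 := by norm_num
    rw [hl]
    obtain ⟨k, m, hm, rfl⟩ := Nat.exists_eq_pow_mul_and_not_dvd hj.ne' 3 (by norm_num)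
    rw [show 9 * (3 ^ k * m) = 3 ^ (k + 2) * m by ring,
      show 3 * (3 ^ k * m) = 3 ^ (k + 1) * m by ring, A_three _ _ hm, A_three _ _ hm,
      A_three _ _ hm]
    push_cast
    ring
  · rw [if_neg h9]
    have h9' : ¬ (9 : ℤ) ∣ n := by
      intro h; exact h9 (by exact_mod_cast h)
    by_cases h3 : 3 ∣ n
    · rw [if_pos h3]
      have e0 : (n : ℤ) % (3 : ℕ) = 0 := by push_cast; omega
      have hl : legendreSym 3 0 = 0 := by norm_num
      rw [e0, hl, G0_empty _ (by omega) h9', G1_empty _ (by omega) h9']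
      obtain ⟨j, rfl⟩ := h3
      have := A_three 1 j (by omega)
      rw [pow_one] at this
      rw [Nat.mul_div_cancel_left j (by norm_num), this]
      push_cast
      ring
    · rw [if_neg h3]
      have : n % 3 = 1 ∨ n % 3 = 2 := by omega
      rcases this with h | h
      · have e0 : (n : ℤ) % (3 : ℕ) = 1 := by push_cast; omega
        have hl : legendreSym 3 1 = 1 := by norm_num
        rw [e0, hl, G0_one _ (by omega), G1_one _ (by omega), main n hn]
        ring
      · have e0 : (n : ℤ) % (3 : ℕ) = 2 := by push_cast; omega
        have hl : legendreSym 3 2 = -1 := by norm_num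
        rw [e0, hl, G0_empty _ (by omega) h9', G1_empty _ (by omega) h9']
        push_cast
        ring
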